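/- arXiv:2602.08035 — 8 statements merged into one kernel-verified Lean document; each statement's English description precedes it below -/
import Mathlib

section
/- Suppose the distributional preference ≿ satisfies the upper-bound property. Then for every S ⊆ 𝒮 and all S', S'' ∈ F(S), we have S' ∼ S''. -/
open Finset

variable {α : Type*}

/-- Strict part of a distributional preference. -/
def strictPref (pref : Finset α → Finset α → Prop) (A B : Finset α) : Prop :=
  pref A B ∧ ¬ pref B A

/-- Indifference part of a distributional preference. -/
def indiffPref (pref : Finset α → Finset α → Prop) (A B : Finset α) : Prop :=
  pref A B ∧ pref B A

/-- Incomparability under a distributional preference. -/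
def incomparable (pref : Finset α → Finset α → Prop) (A B : Finset α) : Prop :=
  ¬ pref A B ∧ ¬ pref B A

/-- `NW q S` is the collection of non-wasteful subsets of `S`. -/
def NW (q : ℕ) (S : Finset α) : Set (Finset α) :=
  {T | T ⊆ S ∧ T.card = min q S.card}

/-- The frontier of `S`: non-wasteful subsets undominated w.r.t. the preference. -/
def frontierSet (pref : Finset α → Finset α → Prop) (q : ℕ) (S : Finset α) :
    Set (Finset α) :=
  {T | T ∈ NW q S ∧ ∀ T' ∈ NW q S, ¬ strictPref pref T' T}

/-- The upper-bound property of a distributional preference. -/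
def upperBoundProperty [DecidableEq α] (pref : Finset α → Finset α → Prop) (q : ℕ) : Prop :=
  ∀ S S' : Finset α, S.card = q → S'.card = q → incomparable pref S S' →
    ∃ S'' ∈ NW q (S ∪ S'), strictPref pref S'' S ∨ strictPref pref S'' S'

/-- The maximizer property of a distributional preference. -/
def maximizerProperty [DecidableEq α] (pref : Finset α → Finset α → Prop) (q : ℕ) : Prop :=
  ∀ S S' : Finset α, S ≠ S' → S.card = q → S'.card = q →
    (∀ S'' ∈ NW q (S ∪ S'), pref S S'' ∧ pref S' S'') →
    ∃ s ∈ S \ S', ∃ s' ∈ S' \ S,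
      indiffPref pref (S.erase s ∪ {s'}) S ∧ indiffPref pref (S'.erase s' ∪ {s}) S'

/-- The improvement property of a distributional preference. -/
def improvementProperty [DecidableEq α] (pref : Finset α → Finset α → Prop) (q : ℕ) : Prop :=
  ∀ S S' : Finset α, S.card = q → S'.card = q → ∀ s ∈ S \ S',
    (∀ S'' ∈ NW q (S ∪ S'), s ∉ S'' → strictPref pref S S'') →
    (∀ S'' ∈ NW q (S ∪ S'), s ∈ S'' → pref S S'') →
    ∃ s' ∈ S' \ S, strictPref pref (S'.erase s' ∪ {s}) S'

/-- A choice rule is non-wasteful. -/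
def nonWasteful (q : ℕ) (Ch : Finset α → Finset α) : Prop :=
  ∀ S : Finset α, (Ch S).card = min q S.card

/-- A choice rule promotes the distributional preference. -/
def promotesPref (pref : Finset α → Finset α → Prop) (Ch : Finset α → Finset α) : Prop :=
  ∀ S : Finset α, ∀ S' ⊆ S, S'.card = (Ch S).card → ¬ strictPref pref S' (Ch S)

/-- A choice rule guarantees no justified envy with respect to priority ranking `π`. -/
def noJustifiedEnvy [DecidableEq α] (pref : Finset α → Finset α → Prop)
    (π : α → α → Prop) (Ch : Finset α → Finset α) : Prop :=
  ∀ S : Finset α, ∀ s ∈ Ch S, ∀ s' ∈ S \ Ch S,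
    pref ((Ch S).erase s ∪ {s'}) (Ch S) → π s s'

/-- Path independence of a choice rule. -/
def pathIndependent [DecidableEq α] (Ch : Finset α → Finset α) : Prop :=
  ∀ S S' : Finset α, Ch (S ∪ S') = Ch (Ch S ∪ S')

/-- Consistency of a choice rule. -/
def consistentRule [DecidableEq α] (Ch : Finset α → Finset α) : Prop :=
  ∀ S : Finset α, ∀ s ∈ S, s ∉ Ch S → Ch (S.erase s) = Ch S

/-- Substitutability of a choice rule. -/
def substitutableRule [DecidableEq α] (Ch : Finset α → Finset α) : Prop :=
  ∀ S : Finset α, ∀ s ∈ S, ∀ s' ∈ S, s ≠ s' → s ∈ Ch S → s ∈ Ch (S.erase s')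

/-- `l` lists the elements of `A` in strictly decreasing `π`-priority. -/
def descList [DecidableEq α] (π : α → α → Prop) (A : Finset α) (l : List α) : Prop :=
  l.Pairwise π ∧ l.Nodup ∧ l.toFinset = A

/-- `A` priority dominates `B` with respect to `π`. -/
def priorityDominates [DecidableEq α] (π : α → α → Prop) (A B : Finset α) : Prop :=
  B.card ≤ A.card ∧
  ∀ la lb : List α, descList π A la → descList π B lb →
    ∀ (k : ℕ) (ha : k < la.length) (hb : k < lb.length),
      la.get ⟨k, ha⟩ = lb.get ⟨k, hb⟩ ∨ π (la.get ⟨k, ha⟩) (lb.get ⟨k, hb⟩)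

/-- The revealed preference axiom for a choice rule: no revealed-priority cycles. -/
def revealedPrefAxiom [DecidableEq α] (pref : Finset α → Finset α → Prop)
    (Ch : Finset α → Finset α) : Prop :=
  ¬ ∃ (K : ℕ) (s : ℕ → α) (T : ℕ → Finset α), 0 < K ∧ s K = s 0 ∧
    ∀ k < K, s k ∈ Ch (T k) ∧ s (k + 1) ∈ T k \ Ch (T k) ∧
      pref ((Ch (T k)).erase (s k) ∪ {s (k + 1)}) (Ch (T k))

/-- Under the upper-bound property, any two frontier sets are
indifferent. -/
theorem stmt1 {α : Type*} [Fintype α] [Nonempty α] [DecidableEq α]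
    (q : ℕ) (hq : 0 < q)
    (pref : Finset α → Finset α → Prop)
    (hrefl : ∀ A : Finset α, pref A A)
    (htrans : ∀ A B C : Finset α, pref A B → pref B C → pref A C)
    (hub : upperBoundProperty pref q) :
    ∀ S : Finset α, ∀ S' ∈ frontierSet pref q S, ∀ S'' ∈ frontierSet pref q S,
      indiffPref pref S' S'' := by
  rintro S A ⟨⟨hAS, hAc⟩, hA⟩ B ⟨⟨hBS, hBc⟩, hB⟩
  rcases le_total S.card q with h | h
  · rw [min_eq_right h] at hAc hBc
    have h1 := Finset.eq_of_subset_of_card_le hAS hAc.ge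
    have h2 := Finset.eq_of_subset_of_card_le hBS hBc.ge
    subst h1
    subst h2
    exact ⟨hrefl _, hrefl _⟩
  · by_cases hAB : pref A B
    · by_cases hBA : pref B A
      · exact ⟨hAB, hBA⟩
      · exact absurd ⟨hAB, hBA⟩ (hB A ⟨hAS, hAc⟩)
    · by_cases hBA : pref B A
      · exact absurd ⟨hBA, hAB⟩ (hA B ⟨hBS, hBc⟩)
      · have hAq : A.card = q := by rw [hAc, min_eq_left h]
        have hBq : B.card = q := by rw [hBc, min_eq_left h]
        obtain ⟨C, ⟨hC, hCc⟩, hs⟩ := hub A B hAq hBq ⟨hAB, hBA⟩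
        have hle : q ≤ (A ∪ B).card := hAq ▸ Finset.card_le_card Finset.subset_union_left
        have hCN : C ∈ NW q S :=
          ⟨hC.trans (Finset.union_subset hAS hBS), by
            rw [hCc, min_eq_left hle, min_eq_left h]⟩
        rcases hs with hs | hs
        · exact absurd hs (hA C hCN)
        · exact absurd hs (hB C hCN)
end

section
/- Suppose the distributional preference ≿ satisfies the upper-bound property. Then for every S ⊆ 𝒮, every S' ∈ F(S), and every S'' ∈ NW(S) \ F(S), we have S' ≻ S''. -/
open Finset

variable {α : Type*}

/-- Under the upper-bound property, any frontier set strictly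
dominates any non-wasteful set off the frontier. -/
theorem stmt2 {α : Type*} [Fintype α] [Nonempty α] [DecidableEq α]
    (q : ℕ) (hq : 0 < q)
    (pref : Finset α → Finset α → Prop)
    (hrefl : ∀ A : Finset α, pref A A)
    (htrans : ∀ A B C : Finset α, pref A B → pref B C → pref A C)
    (hub : upperBoundProperty pref q) :
    ∀ S : Finset α, ∀ S' ∈ frontierSet pref q S,
      ∀ S'' ∈ NW q S \ frontierSet pref q S, strictPref pref S' S'' := by
  intro S S' hS' S'' hS''
  obtain ⟨hN, hnF⟩ := hS''
  have hex : ∃ T, T ∈ NW q S ∧ strictPref pref T S'' := by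
    by_contra hcon
    exact hnF ⟨hN, fun T' hT' hs => hcon ⟨T', hT', hs⟩⟩
  have hst : ∀ A B C : Finset α, strictPref pref A B → strictPref pref B C →
      strictPref pref A C := fun A B C h1 h2 =>
    ⟨htrans _ _ _ h1.1 h2.1, fun h => h1.2 (htrans _ _ _ h2.1 h)⟩
  have : IsTrans (Finset α) (strictPref pref) := ⟨hst⟩
  have : Std.Irrefl (strictPref pref) := ⟨fun A h => h.2 h.1⟩
  have wf : WellFounded (strictPref pref) := Finite.wellFounded_of_trans_of_irrefl _
  obtain ⟨T, ⟨hTN, hTS⟩, hmin⟩ :=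
    wf.has_min {T | T ∈ NW q S ∧ strictPref pref T S''} hex
  have hTmax : ∀ U ∈ NW q S, ¬ strictPref pref U T := fun U hU hUT =>
    hmin U ⟨hU, hst _ _ _ hUT hTS⟩ hUT
  obtain ⟨hS'N, hS'max⟩ := hS'
  have key : pref S' T := by
    by_contra hnot
    have hnot2 : ¬ pref T S' := fun h => hS'max T hTN ⟨h, hnot⟩
    rcases le_total q S.card with hle | hle
    · have e : min q S.card = q := min_eq_left hle
      have c1 : S'.card = q := hS'N.2.trans e
      have c2 : T.card = q := hTN.2.trans e
      obtain ⟨U, hU, hd⟩ := hub S' T c1 c2 ⟨hnot, hnot2⟩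
      have hUN : U ∈ NW q S := by
        refine ⟨hU.1.trans (Finset.union_subset hS'N.1 hTN.1), ?_⟩
        have h1 : S'.card ≤ (S' ∪ T).card := Finset.card_le_card Finset.subset_union_left
        have h2 := hU.2
        rw [min_eq_left (by omega)] at h2
        rw [h2, e]
      rcases hd with h | h
      · exact hS'max U hUN h
      · exact hTmax U hUN h
    · have e : min q S.card = S.card := min_eq_right hle
      have e1 : S' = S := Finset.eq_of_subset_of_card_le hS'N.1 (by rw [hS'N.2, e])
      have e2 : T = S := Finset.eq_of_subset_of_card_le hTN.1 (by rw [hTN.2, e])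
      exact hnot (by rw [e1, e2]; exact hrefl S)
  exact ⟨htrans _ _ _ key hTS.1, fun h => hTS.2 (htrans _ _ _ h key)⟩
end

section
/- Suppose the distributional preference ≿ satisfies the upper-bound property and the maximizer property, and let π be a priority ranking on 𝒮. If Ch and Ch' are two choice rules, each of which is non-wasteful, promotes the distributional preference, and guarantees no justified envy with respect to π, then Ch(S) = Ch'(S) for every S ⊆ 𝒮. -/
open Finset

variable {α : Type*}

theorem max_dominates {α : Type*} [Fintype α] [DecidableEq α]
    (q : ℕ) (pref : Finset α → Finset α → Prop)
    (htrans : ∀ A B C : Finset α, pref A B → pref B C → pref A C)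
    (hub : upperBoundProperty pref q) (S A : Finset α) (hA : A ⊆ S) (hAq : A.card = q)
    (hmx : ∀ T ⊆ S, T.card = q → ¬ strictPref pref T A) :
    ∀ T ⊆ S, T.card = q → pref A T := by
  have : IsTrans (Finset α) (strictPref pref) :=
    ⟨fun a b c h1 h2 => ⟨htrans _ _ _ h1.1 h2.1, fun h => h2.2 (htrans _ _ _ h h1.1)⟩⟩
  have : Std.Irrefl (strictPref pref) := ⟨fun a h => h.2 h.1⟩
  have wf : WellFounded (strictPref pref) := Finite.wellFounded_of_trans_of_irrefl _
  intro T
  induction T using wf.induction with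
  | _ T ih =>
    intro hT hTq
    by_contra hn
    by_cases h2 : pref T A
    · exact hmx T hT hTq ⟨h2, hn⟩
    · obtain ⟨U, ⟨hU, hUc⟩, hd⟩ := hub A T hAq hTq ⟨hn, h2⟩
      have hUS : U ⊆ S := hU.trans (Finset.union_subset hA hT)
      have hle : A.card ≤ (A ∪ T).card := Finset.card_le_card Finset.subset_union_left
      have hUq : U.card = q := by omega
      rcases hd with h | h
      · exact hmx U hUS hUq h
      · exact hn (htrans _ _ _ (ih U h hUS hUq) h.1)

/-- Under the upper-bound and maximizer properties, any two choice
rules that are non-wasteful, promote the distributional preference, and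
guarantee no justified envy w.r.t. the priority ranking `π` coincide. -/
theorem stmt4 {α : Type*} [Fintype α] [Nonempty α] [DecidableEq α]
    (q : ℕ) (hq : 0 < q)
    (pref : Finset α → Finset α → Prop)
    (hrefl : ∀ A : Finset α, pref A A)
    (htrans : ∀ A B C : Finset α, pref A B → pref B C → pref A C)
    (hub : upperBoundProperty pref q)
    (hmax : maximizerProperty pref q)
    (π : α → α → Prop) (hπ : IsStrictTotalOrder α π)
    (Ch Ch' : Finset α → Finset α)
    (hsub : ∀ S : Finset α, Ch S ⊆ S) (hcard : ∀ S : Finset α, (Ch S).card ≤ q)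
    (hsub' : ∀ S : Finset α, Ch' S ⊆ S) (hcard' : ∀ S : Finset α, (Ch' S).card ≤ q)
    (hnw : nonWasteful q Ch) (hpd : promotesPref pref Ch)
    (hne : noJustifiedEnvy pref π Ch)
    (hnw' : nonWasteful q Ch') (hpd' : promotesPref pref Ch')
    (hne' : noJustifiedEnvy pref π Ch') :
    ∀ S : Finset α, Ch S = Ch' S := by
  intro S
  by_contra hneq
  have h1 := hnw S
  have h2 := hnw' S
  by_cases hS : S.card ≤ q
  · apply hneq
    rw [Finset.eq_of_subset_of_card_le (hsub S) (by omega),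
      Finset.eq_of_subset_of_card_le (hsub' S) (by omega)]
  have hA : (Ch S).card = q := by omega
  have hB : (Ch' S).card = q := by omega
  have dA := max_dominates q pref htrans hub S (Ch S) (hsub S) hA
    (fun T hT hTq => hpd S T hT (by omega))
  have dB := max_dominates q pref htrans hub S (Ch' S) (hsub' S) hB
    (fun T hT hTq => hpd' S T hT (by omega))
  obtain ⟨s, hs, s', hs', i1, i2⟩ := hmax _ _ hneq hA hB (by
    rintro U ⟨hU, hUc⟩
    have hUS : U ⊆ S := hU.trans (Finset.union_subset (hsub S) (hsub' S))
    have hle : (Ch S).card ≤ (Ch S ∪ Ch' S).card :=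
      Finset.card_le_card Finset.subset_union_left
    exact ⟨dA U hUS (by omega), dB U hUS (by omega)⟩)
  rw [Finset.mem_sdiff] at hs hs'
  have p1 := hne S s hs.1 s' (Finset.mem_sdiff.2 ⟨hsub' S hs'.1, hs'.2⟩) i1.1
  have p2 := hne' S s' hs'.1 s (Finset.mem_sdiff.2 ⟨hsub S hs.1, hs.2⟩) i2.1
  exact hπ.irrefl s (hπ.trans _ _ _ p1 p2)
end

section
/- Suppose the distributional preference ≿ satisfies the upper-bound property and the maximizer property, let π be a priority ranking on 𝒮, and let Ch* be a choice rule that is non-wasteful, promotes the distributional preference, and guarantees no justified envy with respect to π. If Ch is any choice rule and S ⊆ 𝒮 satisfies Ch(S) ≠ Ch*(S), then at least one of the following holds: (i) |Ch*(S)| > |Ch(S)|; (ii) Ch*(S) ≻ Ch(S); or (iii) Ch*(S) priority dominates Ch(S). -/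
open Finset

variable {α : Type*}

theorem aux_card_exchange {α : Type*} [DecidableEq α] (p : α → Prop) [DecidablePred p]
    (B : Finset α) (s s' : α) (hs : s ∉ B) (h : p s' → p s) :
    (B.filter p).card ≤ ((B.erase s' ∪ {s}).filter p).card := by
  apply Finset.card_le_card_of_injOn (fun b => if b = s' then s else b)
  · intro b hb
    simp only [Finset.coe_filter, Set.mem_setOf_eq] at hb
    simp only [Finset.coe_filter, Set.mem_setOf_eq, Finset.mem_union, Finset.mem_erase,
      Finset.mem_singleton]
    split_ifs with hbs
    · subst hbs
      exact ⟨Or.inr rfl, h hb.2⟩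
    · exact ⟨Or.inl ⟨hbs, hb.1⟩, hb.2⟩
  · intro a ha b hb hab
    simp only [Finset.coe_filter, Set.mem_setOf_eq] at ha hb
    dsimp only at hab
    split_ifs at hab with h1 h2 h2
    · rw [h1, h2]
    · exact absurd (hab ▸ hb.1) hs
    · exact absurd (hab ▸ ha.1) hs
    · exact hab

theorem aux_dom {α : Type*} [DecidableEq α] (π : α → α → Prop) (hπ : IsStrictTotalOrder α π)
    (A B : Finset α) (hc : B.card ≤ A.card)
    (h : ∀ p : α → Prop, (∀ a b, π a b → p b → p a) → ∀ _ : DecidablePred p,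
      (B.filter p).card ≤ (A.filter p).card) : priorityDominates π A B := by
  classical
  refine ⟨hc, ?_⟩
  intro la lb hla hlb k ha hb
  by_contra hcon
  push Not at hcon
  obtain ⟨hla1, hla2, hla3⟩ := hla
  obtain ⟨hlb1, hlb2, hlb3⟩ := hlb
  have hba : π (lb.get ⟨k, hb⟩) (la.get ⟨k, ha⟩) := by
    rcases hπ.toTrichotomous.rel_or_eq_or_rel_swap (a := la.get ⟨k, ha⟩) (b := lb.get ⟨k, hb⟩)
      with h1 | h1 | h1
    · exact absurd h1 hcon.2
    · exact absurd h1 hcon.1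
    · exact h1
  set b := lb.get ⟨k, hb⟩ with hbdef
  have htr : ∀ {x y z : α}, π x y → π y z → π x z := fun h1 h2 => hπ.toIsStrictOrder.toIsTrans.trans _ _ _ h1 h2
  have hir : ∀ x : α, ¬ π x x := hπ.toIsStrictOrder.toIrrefl.irrefl
  have key := h (fun x => x = b ∨ π x b) (by
    rintro x y hxy (rfl | hy)
    · exact Or.inr hxy
    · exact Or.inr (htr hxy hy)) (Classical.decPred _)
  have h1 : k + 1 ≤ (B.filter (fun x => x = b ∨ π x b)).card := by
    have : (lb.take (k+1)).toFinset ⊆ B.filter (fun x => x = b ∨ π x b) := by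
      intro x hx
      rw [List.mem_toFinset, List.mem_take_iff_getElem] at hx
      obtain ⟨i, hi, rfl⟩ := hx
      rw [Finset.mem_filter, ← hlb3, List.mem_toFinset]
      refine ⟨List.getElem_mem _, ?_⟩
      rcases Nat.lt_or_ge i k with hik | hik
      · right
        exact List.pairwise_iff_getElem.1 hlb1 i k _ hb hik
      · left
        have : i = k := by omega
        subst this
        rfl
    calc k + 1 = (lb.take (k+1)).toFinset.card := by
          rw [List.toFinset_card_of_nodup (hlb2.sublist (List.take_sublist _ _)), List.length_take]
          omega
      _ ≤ _ := Finset.card_le_card this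
  have h2 : (A.filter (fun x => x = b ∨ π x b)).card ≤ k := by
    have : A.filter (fun x => x = b ∨ π x b) ⊆ (la.take k).toFinset := by
      intro x hx
      rw [Finset.mem_filter, ← hla3, List.mem_toFinset] at hx
      obtain ⟨hx, hxb⟩ := hx
      rw [List.mem_toFinset, List.mem_take_iff_getElem]
      obtain ⟨i, hi, rfl⟩ := List.getElem_of_mem hx
      have hxa : π la[i] la[k] := by
        rcases hxb with h3 | h3
        · rw [h3]; exact hba
        · exact htr h3 hba
      refine ⟨i, ?_, rfl⟩
      rcases Nat.lt_trichotomy i k with h4 | h4 | h4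
      · omega
      · subst h4
        exact absurd hxa (hir _)
      · exact absurd (htr hxa (List.pairwise_iff_getElem.1 hla1 k i ha hi h4)) (hir _)
    calc _ ≤ (la.take k).toFinset.card := Finset.card_le_card this
      _ ≤ (la.take k).length := List.toFinset_card_le _
      _ ≤ k := by rw [List.length_take]; omega
  have key' : (B.filter (fun x => x = b ∨ π x b)).card ≤ (A.filter (fun x => x = b ∨ π x b)).card := by
    convert key
  omega

/-- Any choice rule deviating from the (unique) rule `Ch*` that is
non-wasteful, promotes the distributional preference, and guarantees no
justified envy is wasteful, distributionally inferior, or priority inferior. -/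
theorem stmt6 {α : Type*} [Fintype α] [Nonempty α] [DecidableEq α]
    (q : ℕ) (hq : 0 < q)
    (pref : Finset α → Finset α → Prop)
    (hrefl : ∀ A : Finset α, pref A A)
    (htrans : ∀ A B C : Finset α, pref A B → pref B C → pref A C)
    (hub : upperBoundProperty pref q)
    (hmax : maximizerProperty pref q)
    (π : α → α → Prop) (hπ : IsStrictTotalOrder α π)
    (ChStar : Finset α → Finset α)
    (hsubStar : ∀ S : Finset α, ChStar S ⊆ S)
    (hcardStar : ∀ S : Finset α, (ChStar S).card ≤ q)
    (hnwStar : nonWasteful q ChStar) (hpdStar : promotesPref pref ChStar)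
    (hneStar : noJustifiedEnvy pref π ChStar)
    (Ch : Finset α → Finset α)
    (hsub : ∀ S : Finset α, Ch S ⊆ S) (hcard : ∀ S : Finset α, (Ch S).card ≤ q)
    (S : Finset α) (hne : Ch S ≠ ChStar S) :
    (Ch S).card < (ChStar S).card ∨
    strictPref pref (ChStar S) (Ch S) ∨
    priorityDominates π (ChStar S) (Ch S) := by
  by_cases hlt : (Ch S).card < (ChStar S).card
  · exact Or.inl hlt
  right
  by_cases hst : strictPref pref (ChStar S) (Ch S)
  · exact Or.inl hst
  right
  have hA := hnwStar S
  have hBS := Finset.card_le_card (hsub S)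
  have hBq := hcard S
  have hqS : q < S.card := by
    by_contra hcon
    have e1 : Ch S = S := Finset.eq_of_subset_of_card_le (hsub S) (by omega)
    have e2 : ChStar S = S := Finset.eq_of_subset_of_card_le (hsubStar S) (by omega)
    exact hne (e1.trans e2.symm)
  have hAq : (ChStar S).card = q := by omega
  have hBq' : (Ch S).card = q := by omega
  -- members of `NW (X ∪ Y)`
  have hNW : ∀ X Y T : Finset α, X ⊆ S → Y ⊆ S → X.card = q → T ∈ NW q (X ∪ Y) →
      T ⊆ S ∧ T.card = q := by
    intro X Y T hX hY hXq hT
    have h1 : X.card ≤ (X ∪ Y).card := Finset.card_le_card Finset.subset_union_left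
    have h2 := hT.2
    exact ⟨hT.1.trans (Finset.union_subset hX hY), by omega⟩
  have hwf : WellFounded (strictPref pref) := by
    have : IsTrans (Finset α) (strictPref pref) :=
      ⟨fun X Y Z h1 h2 => ⟨htrans _ _ _ h1.1 h2.1, fun h3 => h1.2 (htrans _ _ _ h2.1 h3)⟩⟩
    have : Std.Irrefl (strictPref pref) := ⟨fun X h => h.2 h.1⟩
    exact Finite.wellFounded_of_trans_of_irrefl _
  have hmaxA : ∀ B : Finset α, B ⊆ S → B.card = q → pref (ChStar S) B := by
    intro B
    induction B using hwf.induction with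
    | _ B ih =>
    intro hB hBc
    by_contra hcon
    have hn : ¬ pref B (ChStar S) := fun h => hpdStar S B hB (by omega) ⟨h, hcon⟩
    obtain ⟨T, hT, hT'⟩ := hub _ _ hAq hBc ⟨hcon, hn⟩
    obtain ⟨hTS, hTq⟩ := hNW _ _ _ (hsubStar S) hB hAq hT
    rcases hT' with hT' | hT'
    · exact hpdStar S T hTS (by omega) hT'
    · exact hcon (htrans _ _ _ (ih T hT' hTS hTq) hT'.1)
  have hmain : ∀ n : ℕ, ∀ B : Finset α, (ChStar S \ B).card = n → B ⊆ S → B.card = q →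
      pref B (ChStar S) → ∀ p : α → Prop, (∀ a b, π a b → p b → p a) → ∀ _ : DecidablePred p,
      (B.filter p).card ≤ ((ChStar S).filter p).card := by
    intro n
    induction n using Nat.strong_induction_on with
    | _ n ih =>
    intro B hn hB hBc hBA p hp hdec
    by_cases hAB : ChStar S = B
    · rw [← hAB]
    obtain ⟨s, hs, s', hs', h1, h2⟩ := hmax _ _ hAB hAq hBc (by
      intro T hT
      obtain ⟨hTS, hTq⟩ := hNW _ _ _ (hsubStar S) hB hAq hT
      exact ⟨hmaxA T hTS hTq, htrans _ _ _ hBA (hmaxA T hTS hTq)⟩)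
    rw [Finset.mem_sdiff] at hs hs'
    have hπs : π s s' := hneStar S s hs.1 s' (Finset.mem_sdiff.2 ⟨hB hs'.1, hs'.2⟩) h1.1
    have hstep := aux_card_exchange p B s s' hs.2 (hp s s' hπs)
    refine hstep.trans (ih _ ?_ (B.erase s' ∪ {s}) rfl ?_ ?_ (htrans _ _ _ h2.1 hBA) p hp hdec)
    · rw [← hn]
      apply Finset.card_lt_card
      rw [Finset.ssubset_iff_of_subset]
      · exact ⟨s, by simp [hs.1, hs.2], by simp⟩
      · intro x hx
        simp only [Finset.mem_sdiff, Finset.mem_union, Finset.mem_erase, Finset.mem_singleton] at hx ⊢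
        refine ⟨hx.1, fun hxB => hx.2 (Or.inl ⟨?_, hxB⟩)⟩
        rintro rfl
        exact hs'.2 hx.1
    · intro x hx
      simp only [Finset.mem_union, Finset.mem_erase, Finset.mem_singleton] at hx
      rcases hx with hx | rfl
      · exact hB hx.2
      · exact hsubStar S hs.1
    · have hpos : 0 < B.card := Finset.card_pos.2 ⟨s', hs'.1⟩
      rw [Finset.card_union_of_disjoint, Finset.card_erase_of_mem hs'.1, Finset.card_singleton]
      · omega
      · rw [Finset.disjoint_singleton_right]
        exact fun h => hs.2 (Finset.mem_of_mem_erase h)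
  have hBA : pref (Ch S) (ChStar S) := by
    by_contra hcon
    exact hst ⟨hmaxA _ (hsub S) hBq', hcon⟩
  exact aux_dom π hπ _ _ (by omega) (hmain _ (Ch S) rfl (hsub S) hBq' hBA)
end

section
/- Suppose the distributional preference ≿ satisfies the upper-bound property and the maximizer property, and let π be a priority ranking on 𝒮. Then any choice rule Ch that is non-wasteful, promotes the distributional preference, and guarantees no justified envy with respect to π satisfies consistency: for every S ⊆ 𝒮 and s ∈ S with s ∉ Ch(S), we have Ch(S \ {s}) = Ch(S). -/
open Finset

variable {α : Type*}

theorem undominated_is_best {α : Type*} [Fintype α] [DecidableEq α]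
    (q : ℕ) (pref : Finset α → Finset α → Prop)
    (hrefl : ∀ A : Finset α, pref A A)
    (htrans : ∀ A B C : Finset α, pref A B → pref B C → pref A C)
    (hub : upperBoundProperty pref q) (U X : Finset α)
    (hXU : X ⊆ U) (hX : X.card = q)
    (hund : ∀ T ⊆ U, T.card = q → ¬ strictPref pref T X) :
    ∀ T ⊆ U, T.card = q → pref X T := by
  intro T hTU hT
  have : IsTrans (Finset α) (strictPref pref) :=
    ⟨fun a b c h1 h2 => ⟨htrans _ _ _ h1.1 h2.1, fun h => h1.2 (htrans _ _ _ h2.1 h)⟩⟩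
  have : Std.Irrefl (strictPref pref) := ⟨fun a h => h.2 h.1⟩
  have wf : WellFounded (strictPref pref) := Finite.wellFounded_of_trans_of_irrefl _
  obtain ⟨M, ⟨hMU, hM, hMT⟩, hmin⟩ :=
    wf.has_min {T' | T' ⊆ U ∧ T'.card = q ∧ pref T' T} ⟨T, hTU, hT, hrefl T⟩
  by_contra hXT
  have h1 : ¬ pref X M := fun h => hXT (htrans _ _ _ h hMT)
  have h2 : ¬ pref M X := fun h => hund M hMU hM ⟨h, h1⟩
  obtain ⟨W, ⟨hWs, hWc⟩, hW⟩ := hub X M hX hM ⟨h1, h2⟩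
  have hle : q ≤ (X ∪ M).card := hX ▸ Finset.card_le_card Finset.subset_union_left
  rw [min_eq_left hle] at hWc
  have hWU := hWs.trans (Finset.union_subset hXU hMU)
  rcases hW with hW | hW
  · exact hund W hWU hWc hW
  · exact hmin W ⟨hWU, hWc, htrans _ _ _ hW.1 hMT⟩ hW

/-- Under the upper-bound and maximizer properties, any choice
rule that is non-wasteful, promotes the distributional preference, and
guarantees no justified envy w.r.t. `π` is consistent. -/
theorem stmt8 {α : Type*} [Fintype α] [Nonempty α] [DecidableEq α]
    (q : ℕ) (hq : 0 < q)
    (pref : Finset α → Finset α → Prop)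
    (hrefl : ∀ A : Finset α, pref A A)
    (htrans : ∀ A B C : Finset α, pref A B → pref B C → pref A C)
    (hub : upperBoundProperty pref q)
    (hmax : maximizerProperty pref q)
    (π : α → α → Prop) (hπ : IsStrictTotalOrder α π)
    (Ch : Finset α → Finset α)
    (hsub : ∀ S : Finset α, Ch S ⊆ S) (hcard : ∀ S : Finset α, (Ch S).card ≤ q)
    (hnw : nonWasteful q Ch) (hpd : promotesPref pref Ch)
    (hne : noJustifiedEnvy pref π Ch) :
    consistentRule Ch := by
  intro S s hs hsA
  have hlt : q < S.card := by
    by_contra h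
    have h1 := hnw S
    rw [min_eq_right (not_lt.mp h)] at h1
    have h2 : Ch S = S := Finset.eq_of_subset_of_card_le (hsub S) h1.ge
    exact hsA (by rw [h2]; exact hs)
  have hA : (Ch S).card = q := by rw [hnw S]; exact min_eq_left hlt.le
  have hB : (Ch (S.erase s)).card = q := by
    rw [hnw, Finset.card_erase_of_mem hs]; omega
  have hAU : Ch S ⊆ S.erase s := Finset.subset_erase.mpr ⟨hsub S, hsA⟩
  have hBU := hsub (S.erase s)
  have hUS : S.erase s ⊆ S := Finset.erase_subset _ _
  have bA := undominated_is_best q pref hrefl htrans hub S (Ch S) (hsub S) hA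
    (fun T hT hc => hpd S T hT (hc.trans hA.symm))
  have bB := undominated_is_best q pref hrefl htrans hub _ _ hBU hB
    (fun T hT hc => hpd _ T hT (hc.trans hB.symm))
  by_contra hneq
  obtain ⟨a, ha, b, hb, h1, h2⟩ := hmax (Ch S) (Ch (S.erase s)) (Ne.symm hneq) hA hB (by
    rintro W ⟨hW, hc⟩
    have hle : q ≤ (Ch S ∪ Ch (S.erase s)).card :=
      hA.symm.le.trans (Finset.card_le_card Finset.subset_union_left)
    rw [min_eq_left hle] at hc
    have hWU := hW.trans (Finset.union_subset hAU hBU)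
    exact ⟨bA W (hWU.trans hUS) hc, bB W hWU hc⟩)
  rw [Finset.mem_sdiff] at ha hb
  have p1 := hne S a ha.1 b (Finset.mem_sdiff.mpr ⟨hUS (hBU hb.1), hb.2⟩) h1.1
  have p2 := hne _ b hb.1 a (Finset.mem_sdiff.mpr ⟨hAU ha.1, ha.2⟩) h2.1
  exact hπ.irrefl a (hπ.trans _ _ _ p1 p2)
end

section
/- Suppose the distributional preference ≿ satisfies the upper-bound property and the maximizer property. If a choice rule Ch is non-wasteful, promotes the distributional preference, and satisfies the revealed preference axiom, then there exists a priority ranking π on 𝒮 such that Ch guarantees no justified envy with respect to π. -/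
open Finset

variable {α : Type*}

/-- Under the upper-bound and maximizer properties, any choice
rule that is non-wasteful, promotes the distributional preference, and
satisfies the revealed preference axiom guarantees no justified envy with
respect to some priority ranking. -/
theorem stmt10 {α : Type*} [Fintype α] [Nonempty α] [DecidableEq α]
    (q : ℕ) (hq : 0 < q)
    (pref : Finset α → Finset α → Prop)
    (hrefl : ∀ A : Finset α, pref A A)
    (htrans : ∀ A B C : Finset α, pref A B → pref B C → pref A C)
    (hub : upperBoundProperty pref q)
    (hmax : maximizerProperty pref q)
    (Ch : Finset α → Finset α)
    (hsub : ∀ S : Finset α, Ch S ⊆ S) (hcard : ∀ S : Finset α, (Ch S).card ≤ q)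
    (hnw : nonWasteful q Ch) (hpd : promotesPref pref Ch)
    (hrp : revealedPrefAxiom pref Ch) :
    ∃ π : α → α → Prop, IsStrictTotalOrder α π ∧ noJustifiedEnvy pref π Ch := by
  classical
  let R : α → α → Prop := fun a b => ∃ S : Finset α, a ∈ Ch S ∧ b ∈ S \ Ch S ∧
    pref ((Ch S).erase a ∪ {b}) (Ch S)
  have hpath : ∀ a b, Relation.TransGen R a b →
      ∃ (K : ℕ) (s : ℕ → α), 0 < K ∧ s 0 = a ∧ s K = b ∧ ∀ k < K, R (s k) (s (k + 1)) := by
    intro a b h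
    induction h with
    | @single b h =>
      refine ⟨1, fun n => if n = 0 then a else b, by norm_num, by simp, by simp, ?_⟩
      intro k hk
      have : k = 0 := by omega
      subst this
      simpa using h
    | @tail b c _ h ih =>
      obtain ⟨K, s, hK, h0, hb, hs⟩ := ih
      refine ⟨K + 1, fun n => if n ≤ K then s n else c, by omega, by simp [h0], by simp, ?_⟩
      intro k hk
      by_cases hkK : k < K
      · have h1 : k ≤ K := by omega
        have h2 : k + 1 ≤ K := by omega
        simp only [h1, h2, if_true]
        exact hs k hkK
      · have : k = K := by omega
        subst this
        simpa [hb] using h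
  have hirr : ∀ a, ¬ Relation.TransGen R a a := by
    intro a h
    obtain ⟨K, s, hK, h0, h1, hs⟩ := hpath a a h
    have hex : ∀ k, ∃ S : Finset α, k < K → (s k ∈ Ch S ∧ s (k + 1) ∈ S \ Ch S ∧
        pref ((Ch S).erase (s k) ∪ {s (k + 1)}) (Ch S)) := by
      intro k
      by_cases hk : k < K
      · obtain ⟨S, hS⟩ := hs k hk
        exact ⟨S, fun _ => hS⟩
      · exact ⟨∅, fun h => absurd h hk⟩
    choose T hT using hex
    exact hrp ⟨K, s, T, hK, h1.trans h0.symm, hT⟩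
  let P : α → α → Prop := Relation.ReflTransGen R
  have hP : IsPartialOrder α P :=
    { refl := fun a => Relation.ReflTransGen.refl
      trans := fun a b c h1 h2 => Relation.ReflTransGen.trans h1 h2
      antisymm := by
        intro a b h1 h2
        rcases Relation.reflTransGen_iff_eq_or_transGen.1 h1 with h | h
        · exact h.symm
        · exact absurd (Relation.TransGen.trans_left h h2) (hirr a) }
  obtain ⟨L, hL, hPL⟩ := extend_partialOrder P
  refine ⟨fun a b => L a b ∧ a ≠ b, ?_, ?_⟩
  · exact
      { trichotomous := by
          intro a b h1 h2
          by_contra hne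
          rcases hL.total a b with h | h
          · exact h1 ⟨h, hne⟩
          · exact h2 ⟨h, Ne.symm hne⟩
        irrefl := fun a h => h.2 rfl
        trans := by
          rintro a b c ⟨h1, n1⟩ ⟨h2, n2⟩
          refine ⟨hL.trans _ _ _ h1 h2, ?_⟩
          rintro rfl
          exact n1 (hL.antisymm _ _ h1 h2) }
  · intro S s hs s' hs' hp
    refine ⟨hPL _ _ (Relation.ReflTransGen.single ⟨S, hs, hs', hp⟩), ?_⟩
    rintro rfl
    exact (Finset.mem_sdiff.1 hs').2 hs
end

section
/- If a choice rule Ch guarantees no justified envy with respect to some priority ranking π on 𝒮, then Ch satisfies the revealed preference axiom. -/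
open Finset

variable {α : Type*}

/-- If a choice rule guarantees no justified envy with respect to
some priority ranking, then it satisfies the revealed preference axiom. -/
theorem stmt11 {α : Type*} [Fintype α] [Nonempty α] [DecidableEq α]
    (q : ℕ) (hq : 0 < q)
    (pref : Finset α → Finset α → Prop)
    (hrefl : ∀ A : Finset α, pref A A)
    (htrans : ∀ A B C : Finset α, pref A B → pref B C → pref A C)
    (Ch : Finset α → Finset α)
    (hsub : ∀ S : Finset α, Ch S ⊆ S) (hcard : ∀ S : Finset α, (Ch S).card ≤ q)
    (π : α → α → Prop) (hπ : IsStrictTotalOrder α π)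
    (hne : noJustifiedEnvy pref π Ch) :
    revealedPrefAxiom pref Ch := by
  rintro ⟨K, s, T, hK, hs, h⟩
  have key : ∀ k, k < K → π (s 0) (s (k + 1)) := by
    intro k
    induction k with
    | zero =>
      intro hk
      obtain ⟨h1, h2, h3⟩ := h 0 hk
      exact hne (T 0) _ h1 _ h2 h3
    | succ n ih =>
      intro hk
      obtain ⟨h1, h2, h3⟩ := h (n + 1) hk
      exact hπ.trans _ _ _ (ih (by omega)) (hne _ _ h1 _ h2 h3)
  have h0 := key (K - 1) (by omega)
  rw [Nat.sub_add_cancel hK, hs] at h0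
  exact hπ.irrefl _ h0
end

section
/- A choice rule Ch satisfies path independence if and only if it satisfies both consistency and substitutability. -/
open Finset

variable {α : Type*}

/-- Aizerman–Malishevski: A choice rule satisfies path
independence if and only if it satisfies consistency and substitutability. -/
theorem stmt19 {α : Type*} [Fintype α] [Nonempty α] [DecidableEq α]
    (Ch : Finset α → Finset α) (hsub : ∀ S : Finset α, Ch S ⊆ S) :
    pathIndependent Ch ↔ (consistentRule Ch ∧ substitutableRule Ch) := by
  constructor
  · intro h
    refine ⟨?_, ?_⟩
    · intro S s hs hn
      have h1 := h S (S.erase s)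
      have e1 : S ∪ S.erase s = S := Finset.union_eq_left.2 (Finset.erase_subset _ _)
      have e2 : Ch S ∪ S.erase s = S.erase s :=
        Finset.union_eq_right.2 (Finset.subset_erase.2 ⟨hsub S, hn⟩)
      rw [e1, e2] at h1
      exact h1.symm
    · intro S s hs s' hs' hne hc
      have h1 := h (S.erase s') {s'}
      have e1 : S.erase s' ∪ {s'} = S := by
        ext x
        simp only [Finset.mem_union, Finset.mem_erase, Finset.mem_singleton]
        by_cases hx : x = s'
        · simp [hx, hs']
        · simp [hx]
      rw [e1] at h1
      rw [h1] at hc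
      rcases Finset.mem_union.1 (hsub _ hc) with h2 | h2
      · exact h2
      · exact absurd (Finset.mem_singleton.1 h2) hne
  · rintro ⟨hcon, hsubst⟩
    have con : ∀ S D : Finset α, (∀ x ∈ D, x ∉ Ch S) → Ch (S \ D) = Ch S := by
      intro S D
      induction D using Finset.induction_on with
      | empty => intro _; simp
      | insert a D ha ih =>
        intro hD
        have ih' := ih (fun x hx => hD x (Finset.mem_insert_of_mem hx))
        rw [Finset.sdiff_insert]
        by_cases haS : a ∈ S \ D
        · rw [hcon _ a haS (by rw [ih']; exact hD a (Finset.mem_insert_self _ _)), ih']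
        · rw [Finset.erase_eq_of_notMem haS, ih']
    have sb : ∀ S D : Finset α, ∀ s ∈ Ch S, s ∉ D → s ∈ Ch (S \ D) := by
      intro S D s hs
      induction D using Finset.induction_on with
      | empty => intro _; simpa using hs
      | insert a D ha ih =>
        intro hD
        rw [Finset.mem_insert, not_or] at hD
        have ih' := ih hD.2
        rw [Finset.sdiff_insert]
        by_cases haS : a ∈ S \ D
        · exact hsubst _ s (hsub _ ih') a haS hD.1 ih'
        · rwa [Finset.erase_eq_of_notMem haS]
    intro S S'
    have hsubset : Ch (S ∪ S') ⊆ Ch S ∪ S' := by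
      intro x hx
      by_cases hxS : x ∈ S
      · have h1 := sb (S ∪ S') ((S ∪ S') \ S) x hx (by simp [hxS])
        rw [Finset.sdiff_sdiff_eq_self Finset.subset_union_left] at h1
        exact Finset.mem_union_left _ h1
      · rcases Finset.mem_union.1 (hsub _ hx) with h | h
        · exact absurd h hxS
        · exact Finset.mem_union_right _ h
    have h2 := con (S ∪ S') ((S ∪ S') \ (Ch S ∪ S'))
      (fun x hx hx' => (Finset.mem_sdiff.1 hx).2 (hsubset hx'))
    rw [Finset.sdiff_sdiff_eq_self (Finset.union_subset_union_left (hsub S))] at h2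
    exact h2.symm
end
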